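/- Let L > 0 and let P₁, P₂ be finite subsets of the lattice (2π/L)ℤ³; set N = max(|P₁|, |P₂|). Define γ_σ: ℝ³ → ℂ by γ_σ(x) = L^{-3} Σ_{k ∈ P_σ} e^{i k·x} for σ = 1, 2. Let g: ℝ³ → ℂ be measurable and L-periodic in each coordinate with ‖g‖₁ := ∫_{[0,L]³} |g| dx < ∞. Let k ≥ 1 be an integer and let π, τ be permutations of {1, …, k+1} such that the graph on the vertex set {1, …, k+1} × {1, 2}, whose edges are { (j,1), (j,2) } for 2 ≤ j ≤ k+1, together with { (j,1), (π(j),1) } for every j with π(j) ≠ j and { (j,2), (τ(j),2) } for every j with τ(j) ≠ j, is connected. Then for all x₁, y₁ ∈ ℝ³: | ∫_{([0,L]³)^{2k}} Π_{i=1}^{k+1} γ₁(x_i − x_{π(i)}) · Π_{j=1}^{k+1} γ₂(y_j − y_{τ(j)}) · Π_{j=2}^{k+1} g(x_j − y_j) dx₂ ⋯ dx_{k+1} dy₂ ⋯ dy_{k+1} | ≤ (N/L³)² (N ‖g‖₁ / L³)^k. -/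

import Mathlib

open MeasureTheory

noncomputable section

/-- The one-particle density matrix kernel `γ(x) = L⁻³ Σ_{k ∈ P} e^{i k·x}` of a Slater
determinant with momenta `P`. -/
def gam (L : ℝ) (P : Finset (Fin 3 → ℝ)) (x : Fin 3 → ℝ) : ℂ :=
  ((L : ℂ) ^ 3)⁻¹ * ∑ p ∈ P, Complex.exp (Complex.I * ((∑ j : Fin 3, p j * x j : ℝ) : ℂ))

/-- The box `[0,L]³`. -/
def box (L : ℝ) : Set (Fin 3 → ℝ) := Set.univ.pi fun _ => Set.Icc (0 : ℝ) L

/-- The graph of a type-(B2) diagram `(π, τ, G)`: vertices `(j, c)` with `j ∈ {1,…,k+1}`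
(indexed by `Fin (k+1)`, `0` corresponding to the external index `1`) and colour `c`;
edges `{(j,1),(j,2)}` for `j ≠ 0`, `{(j,1),(π j,1)}` for `π j ≠ j` and `{(j,2),(τ j,2)}`
for `τ j ≠ j`. -/
def diagramGraph (k : ℕ) (π τ : Equiv.Perm (Fin (k + 1))) :
    SimpleGraph (Fin (k + 1) × Bool) :=
  SimpleGraph.fromRel fun u v =>
    (u.1 = v.1 ∧ u.1 ≠ 0) ∨
    (u.2 = false ∧ v.2 = false ∧ v.1 = π u.1) ∨
    (u.2 = true ∧ v.2 = true ∧ v.1 = τ u.1)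



/-- The solutions of momentum conservation. -/
def solSet (k : ℕ) (π τ : Equiv.Perm (Fin (k + 1))) (P₁ P₂ : Finset (Fin 3 → ℝ)) :
    Finset ((Fin (k + 1) → Fin 3 → ℝ) × (Fin (k + 1) → Fin 3 → ℝ)) :=
  open Classical in
  ((Fintype.piFinset fun _ : Fin (k+1) => P₁) ×ˢ (Fintype.piFinset fun _ : Fin (k+1) => P₂)).filter
    fun s => ∀ j : Fin k, (s.1 j.succ - s.1 (π.symm j.succ)) + (s.2 j.succ - s.2 (τ.symm j.succ)) = 0

def lev (k : ℕ) (π τ : Equiv.Perm (Fin (k + 1))) : ℕ → Set (Fin (k+1))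
  | 0 => {0}
  | n+1 => {j | π j ∈ lev k π τ n ∨ τ j ∈ lev k π τ n}

lemma perm_closed {α : Type*} [Finite α] (π : Equiv.Perm α) (S : Set α)
    (h : ∀ j, π j ∈ S → j ∈ S) (j : α) (hj : j ∈ S) : π j ∈ S := by
  have h1 : ∀ n : ℕ, ((π⁻¹)^n) j ∈ S := by
    intro n
    induction n with
    | zero => simpa
    | succ n ih =>
      apply h
      rw [pow_succ']
      simpa using ih
  have h2 := h1 (orderOf π - 1)
  have h3 : (π⁻¹)^(orderOf π - 1) = π := by
    have h0 : 0 < orderOf π := orderOf_pos π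
    rw [inv_pow, inv_eq_iff_mul_eq_one, ← pow_succ, Nat.sub_add_cancel h0, pow_orderOf_eq_one]
  rwa [h3] at h2

lemma lev_exists (k : ℕ) (π τ : Equiv.Perm (Fin (k + 1)))
    (hlinked : (diagramGraph k π τ).Connected) (j : Fin (k+1)) : ∃ n, j ∈ lev k π τ n := by
  let S : Set (Fin (k+1)) := {j | ∃ n, j ∈ lev k π τ n}
  have hπ : ∀ j, π j ∈ S → j ∈ S := fun j ⟨n, hn⟩ => ⟨n+1, Or.inl hn⟩
  have hτ : ∀ j, τ j ∈ S → j ∈ S := fun j ⟨n, hn⟩ => ⟨n+1, Or.inr hn⟩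
  have hπ' := perm_closed π S hπ
  have hτ' := perm_closed τ S hτ
  have key : ∀ u v, (diagramGraph k π τ).Adj u v → u.1 ∈ S → v.1 ∈ S := by
    intro u v huv hu
    rw [diagramGraph, SimpleGraph.fromRel_adj] at huv
    rcases huv.2 with (h | h | h) | (h | h | h)
    · rwa [← h.1]
    · rw [h.2.2]; exact hπ' _ hu
    · rw [h.2.2]; exact hτ' _ hu
    · rwa [h.1]
    · rw [h.2.2] at hu; exact hπ _ hu
    · rw [h.2.2] at hu; exact hτ _ hu
  obtain ⟨w⟩ := hlinked.preconnected (0, false) (j, false)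
  have : ∀ u v (w : (diagramGraph k π τ).Walk u v), u.1 ∈ S → v.1 ∈ S := by
    intro u v w
    induction w with
    | nil => exact id
    | cons h _ ih => exact fun hu => ih (key _ _ h hu)
  exact this _ _ w ⟨0, rfl⟩

lemma rank_exists (k : ℕ) (π τ : Equiv.Perm (Fin (k + 1)))
    (hlinked : (diagramGraph k π τ).Connected) :
    ∃ (d : Fin (k+1) → ℕ) (c : Fin (k+1) → Bool), ∀ j, j ≠ 0 →
      d (if c j then τ j else π j) < d j := by
  classical
  have h := lev_exists k π τ hlinked
  refine ⟨fun j => Nat.find (h j), fun j => decide (Nat.find (h (τ j)) < Nat.find (h j)), ?_⟩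
  intro j hj
  by_cases hc : Nat.find (h (τ j)) < Nat.find (h j)
  · simp [hc]
  · simp only [hc, decide_false]
    have hs := Nat.find_spec (h j)
    rcases Nat.eq_zero_or_eq_succ_pred (Nat.find (h j)) with hn | hn
    · rw [hn] at hs; exact absurd hs hj
    · rw [hn] at hs
      rcases hs with hs | hs
      · have := Nat.find_min' (h (π j)) hs
        simp only [Bool.false_eq_true, if_false]
        omega
      · have := Nat.find_min' (h (τ j)) hs
        omega

lemma solSet_card (k : ℕ) (π τ : Equiv.Perm (Fin (k + 1))) (P₁ P₂ : Finset (Fin 3 → ℝ))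
    (hlinked : (diagramGraph k π τ).Connected) :
    (solSet k π τ P₁ P₂).card ≤ (max P₁.card P₂.card)^(k+2) := by
  classical
  obtain ⟨d, c, hd⟩ := rank_exists k π τ hlinked
  set N := max P₁.card P₂.card
  let T : Finset ((Fin 3 → ℝ) × (Fin 3 → ℝ) × (Fin k → Fin 3 → ℝ)) :=
    P₁ ×ˢ P₂ ×ˢ Fintype.piFinset fun j : Fin k => if c j.succ then P₁ else P₂
  let f : (Fin (k + 1) → Fin 3 → ℝ) × (Fin (k + 1) → Fin 3 → ℝ) →
      ((Fin 3 → ℝ) × (Fin 3 → ℝ) × (Fin k → Fin 3 → ℝ)) := fun s =>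
    (s.1 0, s.2 0, fun j => if c j.succ then s.1 j.succ else s.2 j.succ)
  have hT : T.card ≤ N^(k+2) := by
    have : (Fintype.piFinset fun j : Fin k => if c j.succ then P₁ else P₂).card ≤ N^k := by
      rw [Fintype.card_piFinset]
      calc _ ≤ ∏ j : Fin k, N := Finset.prod_le_prod' fun j _ => by
            split_ifs
            · exact le_max_left _ _
            · exact le_max_right _ _
        _ = N^k := by simp
    simp only [T, Finset.card_product]
    calc _ ≤ N * (N * N^k) := by
          gcongr
          · exact le_max_left _ _
          · exact le_max_right _ _
      _ = _ := by ring
  refine le_trans (Finset.card_le_card_of_injOn f ?_ ?_) hT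
  · intro s hs
    simp only [solSet, Finset.coe_filter, Set.mem_ofPred_eq, Finset.mem_product,
      Fintype.mem_piFinset] at hs
    simp only [T, f, Finset.mem_coe, Finset.mem_product, Fintype.mem_piFinset]
    refine ⟨hs.1.1 0, hs.1.2 0, fun j => ?_⟩
    split_ifs
    · exact hs.1.1 _
    · exact hs.1.2 _
  · intro s hs t ht hst
    simp only [solSet, Finset.coe_filter, Set.mem_ofPred_eq, Finset.mem_product,
      Fintype.mem_piFinset] at hs ht
    replace hs := hs.2
    replace ht := ht.2
    simp only [f, Prod.mk.injEq, funext_iff (α := Fin k)] at hst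
    obtain ⟨h10, h20, hst⟩ := hst
    obtain ⟨M, hM⟩ : ∃ M, ∀ j, d j ≤ M :=
      ⟨Finset.univ.sup d, fun j => Finset.le_sup (Finset.mem_univ j)⟩
    have main : ∀ n, ∀ j, M < d j + n → s.1 j = t.1 j ∧ s.2 j = t.2 j := by
      intro n
      induction n with
      | zero => intro j hj; have := hM j; omega
      | succ n ih =>
        intro j hj
        by_cases hj0 : j = 0
        · subst hj0; exact ⟨h10, h20⟩
        obtain ⟨i, rfl⟩ := Fin.exists_succ_eq.2 hj0
        -- incoming edges
        have e1 : s.1 (π.symm i.succ) = t.1 (π.symm i.succ) := by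
          by_cases h0 : π.symm i.succ = 0
          · rw [h0]; exact h10
          have hdd := hd _ h0
          by_cases hc : c (π.symm i.succ) = true
          · obtain ⟨m, hm⟩ := Fin.exists_succ_eq.2 h0
            have := hst m
            rw [hm, hc] at this
            simpa using this
          · rw [if_neg hc, Equiv.apply_symm_apply] at hdd
            exact (ih _ (by omega)).1
        have e2 : s.2 (τ.symm i.succ) = t.2 (τ.symm i.succ) := by
          by_cases h0 : τ.symm i.succ = 0
          · rw [h0]; exact h20
          have hdd := hd _ h0
          by_cases hc : c (τ.symm i.succ) = true
          · rw [if_pos hc, Equiv.apply_symm_apply] at hdd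
            exact (ih _ (by omega)).2
          · obtain ⟨m, hm⟩ := Fin.exists_succ_eq.2 h0
            have := hst m
            rw [hm, if_neg hc, if_neg hc] at this
            exact this
        have h1 := hs i
        have h2 := ht i
        have h3 := hst i
        rw [e1, e2] at h1
        have h4 : s.1 i.succ + s.2 i.succ = t.1 i.succ + t.2 i.succ := by
          have := h1.trans h2.symm
          have h5 : s.1 i.succ + s.2 i.succ - (t.1 (π.symm i.succ) + t.2 (τ.symm i.succ)) =
            t.1 i.succ + t.2 i.succ - (t.1 (π.symm i.succ) + t.2 (τ.symm i.succ)) := by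
            convert this using 1 <;> abel
          exact sub_left_inj.1 h5
        by_cases hc : c i.succ = true
        · rw [if_pos hc, if_pos hc] at h3
          refine ⟨h3, ?_⟩
          rw [h3] at h4
          exact add_left_cancel h4
        · rw [if_neg hc, if_neg hc] at h3
          refine ⟨?_, h3⟩
          rw [h3] at h4
          exact add_right_cancel h4
    ext1
    · funext j; exact (main (M+1) j (by omega)).1
    · funext j; exact (main (M+1) j (by omega)).2

/-- plane wave -/
def pw (p x : Fin 3 → ℝ) : ℂ := Complex.exp (Complex.I * ((∑ j : Fin 3, p j * x j : ℝ) : ℂ))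

def IsLat (L : ℝ) (p : Fin 3 → ℝ) : Prop := ∃ n : Fin 3 → ℤ, ∀ j, p j = 2 * Real.pi / L * n j

lemma IsLat.add {L : ℝ} {p q : Fin 3 → ℝ} (hp : IsLat L p) (hq : IsLat L q) : IsLat L (p + q) := by
  obtain ⟨n, hn⟩ := hp
  obtain ⟨m, hm⟩ := hq
  exact ⟨n + m, fun j => by simp [hn, hm]; ring⟩

lemma IsLat.sub {L : ℝ} {p q : Fin 3 → ℝ} (hp : IsLat L p) (hq : IsLat L q) : IsLat L (p - q) := by
  obtain ⟨n, hn⟩ := hp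
  obtain ⟨m, hm⟩ := hq
  exact ⟨n - m, fun j => by simp [hn, hm]; ring⟩

lemma pw_norm (p x : Fin 3 → ℝ) : ‖pw p x‖ = 1 := by
  rw [pw, mul_comm, Complex.norm_exp_ofReal_mul_I]

lemma pw_add_right (p x y : Fin 3 → ℝ) : pw p (x + y) = pw p x * pw p y := by
  rw [pw, pw, pw, ← Complex.exp_add]
  simp only [Pi.add_apply, mul_add, Finset.sum_add_distrib, Complex.ofReal_add]

lemma pw_add_left (p q x : Fin 3 → ℝ) : pw (p + q) x = pw p x * pw q x := by
  rw [pw, pw, pw, ← Complex.exp_add]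
  simp only [Pi.add_apply, add_mul, mul_add, Finset.sum_add_distrib, Complex.ofReal_add]

lemma pw_neg (p x : Fin 3 → ℝ) : pw (-p) x = pw p (-x) := by
  simp [pw]

lemma pw_zero (x : Fin 3 → ℝ) : pw 0 x = 1 := by
  simp [pw]

lemma pw_continuous (p : Fin 3 → ℝ) : Continuous (pw p) := by
  unfold pw; fun_prop

lemma pw_per {L : ℝ} (hL : 0 < L) {p : Fin 3 → ℝ} (hp : IsLat L p) (x : Fin 3 → ℝ) (j : Fin 3) :
    pw p (x + Pi.single j L) = pw p x := by
  obtain ⟨n, hn⟩ := hp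
  rw [pw_add_right]
  have : pw p (Pi.single j L) = 1 := by
    simp only [pw, Pi.single_apply, mul_ite, mul_zero, Finset.sum_ite_eq', Finset.mem_univ, if_true,
      hn]
    rw [Complex.exp_eq_one_iff]
    refine ⟨n j, ?_⟩
    have : (L : ℂ) ≠ 0 := by exact_mod_cast hL.ne'
    push_cast
    field_simp
  rw [this, mul_one]

lemma box_domain {L : ℝ} (hL : 0 < L) : ∃ D : Set (Fin 3 → ℝ), MeasurableSet D ∧
    D =ᵐ[volume] box L ∧
    IsAddFundamentalDomain
      (Submodule.span ℤ (Set.range fun j : Fin 3 => (Pi.single j L : Fin 3 → ℝ))).toAddSubgroup D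
      (volume : Measure (Fin 3 → ℝ)) := by
  let b : Module.Basis (Fin 3) ℝ (Fin 3 → ℝ) :=
    (Pi.basisFun ℝ (Fin 3)).unitsSMul (fun _ => Units.mk0 L hL.ne')
  have hb : (fun j : Fin 3 => (Pi.single j L : Fin 3 → ℝ)) = b := by
    ext j i
    simp only [b, Module.Basis.unitsSMul_apply, Pi.basisFun_apply]
    simp [Pi.single_apply, Units.smul_def]
  have hset : ZSpan.fundamentalDomain b = Set.univ.pi fun _ : Fin 3 => Set.Ico (0:ℝ) L := by
    ext x
    simp only [ZSpan.mem_fundamentalDomain, b, Module.Basis.repr_unitsSMul, Pi.basisFun_repr,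
      Set.mem_univ_pi, Set.mem_Ico, Units.smul_def, Units.val_inv_eq_inv_val, Units.val_mk0,
      smul_eq_mul]
    refine forall_congr' fun i => ?_
    rw [inv_mul_eq_div, div_lt_one hL, le_div_iff₀ hL, zero_mul]
  refine ⟨ZSpan.fundamentalDomain b, ZSpan.fundamentalDomain_measurableSet b, ?_, ?_⟩
  · rw [hset, box]
    have h := Measure.univ_pi_Ico_ae_eq_Icc (μ := fun _ : Fin 3 => (volume : Measure ℝ))
      (f := fun _ => 0) (g := fun _ => L)
    rw [← Set.pi_univ_Icc] at h
    exact h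
  · rw [hb]
    exact ZSpan.isAddFundamentalDomain' b volume

lemma per_span {L : ℝ} {E : Type*} {F : (Fin 3 → ℝ) → E}
    (hF : ∀ (x : Fin 3 → ℝ) (j : Fin 3), F (x + Pi.single j L) = F x)
    (v : Fin 3 → ℝ)
    (hv : v ∈ Submodule.span ℤ (Set.range fun j : Fin 3 => (Pi.single j L : Fin 3 → ℝ))) :
    ∀ x, F (v + x) = F x := by
  induction hv using Submodule.span_induction with
  | mem v h =>
    obtain ⟨j, rfl⟩ := h
    intro x
    rw [add_comm]; exact hF x j
  | zero => simp
  | add v w _ _ h1 h2 => intro x; rw [add_assoc, h1, h2]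
  | smul a v _ h =>
    have hneg : ∀ x, F (-v + x) = F x := fun x => by
      have := h (-v + x)
      rwa [add_neg_cancel_left, eq_comm] at this
    induction a using Int.induction_on with
    | zero => simp
    | succ n ih => intro x; rw [add_smul, one_smul, add_assoc, ih, h]
    | pred n ih => intro x; rw [sub_smul, one_smul, sub_eq_add_neg, add_assoc, ih, hneg]

open scoped Pointwise in
lemma shift_box {L : ℝ} (hL : 0 < L) {E : Type*} [NormedAddCommGroup E] [NormedSpace ℝ E]
    {F : (Fin 3 → ℝ) → E}
    (hF : ∀ (x : Fin 3 → ℝ) (j : Fin 3), F (x + Pi.single j L) = F x) (v : Fin 3 → ℝ) :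
    (∫ x in box L, F (x - v) = ∫ x in box L, F x) ∧
    (IntegrableOn F (box L) → IntegrableOn (fun x => F (x - v)) (box L)) := by
  obtain ⟨D, hDm, hD, hd⟩ := box_domain hL
  have hcount : Countable
    (Submodule.span ℤ (Set.range fun j : Fin 3 => (Pi.single j L : Fin 3 → ℝ))).toAddSubgroup :=
    inferInstanceAs (Countable
      (Submodule.span ℤ (Set.range fun j : Fin 3 => (Pi.single j L : Fin 3 → ℝ))))
  have hd2 := hd.vadd_of_comm v
  have hpre : v +ᵥ D = (fun x => x - v) ⁻¹' D := by
    ext x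
    rw [Set.mem_vadd_set_iff_neg_vadd_mem, Set.mem_preimage, vadd_eq_add, neg_add_eq_sub]
  rw [hpre] at hd2
  have hinv : ∀ (g : (Submodule.span ℤ
      (Set.range fun j : Fin 3 => (Pi.single j L : Fin 3 → ℝ))).toAddSubgroup) (x : Fin 3 → ℝ),
      (fun x => F (x - v)) (g +ᵥ x) = (fun x => F (x - v)) x := by
    intro g x
    have := per_span hF g.1 g.2 (x - v)
    rw [← add_sub_assoc] at this
    exact this
  have hmp : MeasurePreserving (fun x : Fin 3 → ℝ => x - v) volume volume :=
    measurePreserving_sub_right volume v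
  have hemb : MeasurableEmbedding (fun x : Fin 3 → ℝ => x - v) :=
    (MeasurableEquiv.subRight v).measurableEmbedding
  constructor
  · rw [← setIntegral_congr_set hD, ← setIntegral_congr_set hD, hd.setIntegral_eq hd2 hinv]
    exact hmp.setIntegral_preimage_emb hemb F D
  · intro h
    rw [← integrableOn_congr_set_ae hD] at h ⊢
    rw [hd.integrableOn_iff hd2 hinv]
    exact (hmp.integrableOn_comp_preimage hemb).2 h

lemma pw_int {L : ℝ} (hL : 0 < L) {p : Fin 3 → ℝ} (hp : IsLat L p) (h0 : p ≠ 0) :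
    ∫ x in box L, pw p x = 0 := by
  obtain ⟨j, hj⟩ := Function.ne_iff.1 h0
  have hj' : p j ≠ 0 := hj
  have h := (shift_box hL (pw_per hL hp) (-Pi.single j (Real.pi / p j))).1
  have h2 : ∀ x, pw p (x - -Pi.single j (Real.pi / p j)) = - pw p x := by
    intro x
    rw [sub_neg_eq_add, pw_add_right]
    have : pw p (Pi.single j (Real.pi / p j)) = -1 := by
      simp only [pw, Pi.single_apply, mul_ite, mul_zero, Finset.sum_ite_eq', Finset.mem_univ,
        if_true]
      rw [mul_div_cancel₀ _ hj', mul_comm, Complex.exp_pi_mul_I]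
    rw [this, mul_neg_one]
  simp only [h2, integral_neg] at h
  exact self_eq_neg.1 h.symm

lemma box_measurable (L : ℝ) : MeasurableSet (box L) :=
  MeasurableSet.univ_pi fun _ => measurableSet_Icc

lemma box_volume {L : ℝ} (hL : 0 < L) : volume (box L) = ENNReal.ofReal (L ^ 3) := by
  rw [box, volume_pi_pi]
  simp [ENNReal.ofReal_pow hL.le]

/-- single pair integrand -/
def pairF (g : (Fin 3 → ℝ) → ℂ) (a b : Fin 3 → ℝ) (z : (Fin 3 → ℝ) × (Fin 3 → ℝ)) : ℂ :=
  pw a z.1 * pw b z.2 * g (z.1 - z.2)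

lemma pair_integrable {L : ℝ} (hL : 0 < L) {g : (Fin 3 → ℝ) → ℂ} (hg_meas : Measurable g)
    (hg_per : ∀ (x : Fin 3 → ℝ) (j : Fin 3), g (x + Pi.single j L) = g x)
    (hg_int : IntegrableOn g (box L)) (a b : Fin 3 → ℝ) :
    Integrable (pairF g a b)
      ((volume.restrict (box L)).prod (volume.restrict (box L))) := by
  have hfin : IsFiniteMeasure (volume.restrict (box L)) :=
    ⟨by rw [Measure.restrict_apply_univ, box_volume hL]; exact ENNReal.ofReal_lt_top⟩
  have hmeas : Measurable (pairF g a b) := by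
    have := (pw_continuous a).measurable
    have := (pw_continuous b).measurable
    unfold pairF
    fun_prop
  have hn : ∀ z, ‖pairF g a b z‖ = ‖g (z.1 - z.2)‖ := fun z => by
    simp [pairF, pw_norm]
  rw [integrable_prod_iff' hmeas.aestronglyMeasurable]
  constructor
  · refine Filter.Eventually.of_forall fun y => ?_
    have h1 := (shift_box hL hg_per y).2 hg_int
    refine Integrable.mono h1 ?_ ?_
    · exact (hmeas.comp (measurable_id.prodMk measurable_const)).aestronglyMeasurable
    · exact Filter.Eventually.of_forall fun x => by rw [hn]
  · simp only [hn]
    have : ∀ y, ∫ x in box L, ‖g (x - y)‖ = ∫ x in box L, ‖g x‖ := fun y =>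
      (shift_box hL (F := fun x => ‖g x‖) (fun x j => by rw [hg_per]) y).1
    simp only [this]
    exact integrable_const _

lemma pair_bound {L : ℝ} (hL : 0 < L) {g : (Fin 3 → ℝ) → ℂ} (hg_meas : Measurable g)
    (hg_per : ∀ (x : Fin 3 → ℝ) (j : Fin 3), g (x + Pi.single j L) = g x)
    (hg_int : IntegrableOn g (box L)) {a b : Fin 3 → ℝ} (ha : IsLat L a) (hb : IsLat L b) :
    (a + b ≠ 0 → ∫ z, pairF g a b z
      ∂((volume.restrict (box L)).prod (volume.restrict (box L))) = 0) ∧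
    ‖∫ z, pairF g a b z ∂((volume.restrict (box L)).prod (volume.restrict (box L)))‖ ≤
      L ^ 3 * ∫ x in box L, ‖g x‖ := by
  have key : ∫ z, pairF g a b z ∂((volume.restrict (box L)).prod (volume.restrict (box L))) =
      (∫ y in box L, pw (a + b) y) * ∫ x in box L, pw a x * g x := by
    rw [integral_prod_symm _ (pair_integrable hL hg_meas hg_per hg_int a b), ← integral_mul_const]
    congr 1
    ext y
    have h := (shift_box hL (F := fun x => pw a x * g x)
      (fun x j => by rw [hg_per, pw_per hL ha]) y).1
    rw [← h, ← integral_const_mul]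
    congr 1
    ext x
    have : pw a x = pw a (x - y) * pw a y := by rw [← pw_add_right, sub_add_cancel]
    rw [pairF, pw_add_left]
    simp only
    rw [this]
    ring
  rw [key]
  refine ⟨fun h => by rw [pw_int hL (ha.add hb) h, zero_mul], ?_⟩
  rw [norm_mul]
  gcongr
  · refine (norm_setIntegral_le_of_norm_le_const (C := 1) ?_ ?_).trans ?_
    · rw [box_volume hL]; exact ENNReal.ofReal_lt_top
    · intro x _; rw [pw_norm]
    · rw [measureReal_def, box_volume hL, ENNReal.toReal_ofReal (by positivity), one_mul]
  · refine (norm_integral_le_integral_norm _).trans ?_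
    simp [pw_norm]

lemma gam_prod (L : ℝ) (P : Finset (Fin 3 → ℝ)) (k : ℕ) (π : Equiv.Perm (Fin (k + 1)))
    (X : Fin (k + 1) → Fin 3 → ℝ) :
    ∏ i, gam L P (X i - X (π i)) = (((L : ℂ) ^ 3)⁻¹) ^ (k + 1) *
      ∑ p ∈ Fintype.piFinset (fun _ : Fin (k + 1) => P), ∏ i, pw (p i - p (π.symm i)) (X i) := by
  have h1 : ∀ i, gam L P (X i - X (π i)) = ((L : ℂ) ^ 3)⁻¹ * ∑ p ∈ P, pw p (X i - X (π i)) :=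
    fun i => rfl
  simp only [h1]
  rw [Finset.prod_mul_distrib, Finset.prod_univ_sum]
  congr 1
  · simp
  · refine Finset.sum_congr rfl fun p _ => ?_
    have h2 : ∏ i, pw (p i) (X i - X (π i)) = (∏ i, pw (p i) (X i)) * ∏ i, pw (-p i) (X (π i)) := by
      rw [← Finset.prod_mul_distrib]
      refine Finset.prod_congr rfl fun i _ => ?_
      rw [sub_eq_add_neg, pw_add_right, pw_neg]
    have h3 : ∏ i, pw (-p i) (X (π i)) = ∏ i, pw (-p (π.symm i)) (X i) := by
      rw [← Equiv.prod_comp π (fun i => pw (-p (π.symm i)) (X i))]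
      simp
    rw [h2, h3, ← Finset.prod_mul_distrib]
    refine Finset.prod_congr rfl fun i _ => ?_
    rw [sub_eq_add_neg, pw_add_left]

lemma pi_pair {k : ℕ} (μ : Measure (Fin 3 → ℝ)) [SigmaFinite μ]
    (h : Fin k → (Fin 3 → ℝ) × (Fin 3 → ℝ) → ℂ) :
    (∫ w : (Fin k → Fin 3 → ℝ) × (Fin k → Fin 3 → ℝ), ∏ j, h j (w.1 j, w.2 j)
      ∂((Measure.pi fun _ => μ).prod (Measure.pi fun _ => μ)) = ∏ j, ∫ z, h j z ∂(μ.prod μ)) ∧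
    ((∀ j, Integrable (h j) (μ.prod μ)) →
      Integrable (fun w : (Fin k → Fin 3 → ℝ) × (Fin k → Fin 3 → ℝ) => ∏ j, h j (w.1 j, w.2 j))
      ((Measure.pi fun _ => μ).prod (Measure.pi fun _ => μ))) := by
  have mp := measurePreserving_arrowProdEquivProdArrow (Fin 3 → ℝ) (Fin 3 → ℝ) (Fin k)
    (fun _ => μ) (fun _ => μ)
  constructor
  · rw [← mp.integral_comp']
    exact integral_fintype_prod_eq_prod (μ := fun _ : Fin k => μ.prod μ) h
  · intro hi
    rw [← mp.integrable_comp_emb (MeasurableEquiv.measurableEmbedding _)]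
    exact Integrable.fintype_prod (μ := fun _ : Fin k => μ.prod μ) hi

/-- Exact evaluation bound for the linked type-(B2) diagrams of the
Gaudin–Gillespie–Ripka expansion: if the diagram `(π, τ)` is linked (its graph is
connected), then the corresponding integral is bounded by `ρ² (ρ‖g‖₁)^k` with
`ρ = N/L³`, `N = max(|P₁|, |P₂|)`. -/
theorem linked_diagram_value_bound
    (L : ℝ) (hL : 0 < L)
    (P₁ P₂ : Finset (Fin 3 → ℝ))
    (hP₁ : ∀ p ∈ P₁, ∃ n : Fin 3 → ℤ, ∀ j, p j = 2 * Real.pi / L * n j)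
    (hP₂ : ∀ p ∈ P₂, ∃ n : Fin 3 → ℤ, ∀ j, p j = 2 * Real.pi / L * n j)
    (g : (Fin 3 → ℝ) → ℂ)
    (hg_meas : Measurable g)
    (hg_per : ∀ (x : Fin 3 → ℝ) (j : Fin 3), g (x + Pi.single j L) = g x)
    (hg_int : IntegrableOn g (box L))
    (k : ℕ) (hk : 1 ≤ k)
    (π τ : Equiv.Perm (Fin (k + 1)))
    (hlinked : (diagramGraph k π τ).Connected)
    (x₁ y₁ : Fin 3 → ℝ) :
    ‖∫ w : (Fin k → Fin 3 → ℝ) × (Fin k → Fin 3 → ℝ) in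
        (Set.univ.pi fun _ => box L) ×ˢ (Set.univ.pi fun _ => box L),
        (∏ i : Fin (k + 1),
            gam L P₁ (Fin.cases x₁ w.1 i - Fin.cases x₁ w.1 (π i))) *
        (∏ j : Fin (k + 1),
            gam L P₂ (Fin.cases y₁ w.2 j - Fin.cases y₁ w.2 (τ j))) *
        (∏ j : Fin k, g (w.1 j - w.2 j))‖
      ≤ ((max P₁.card P₂.card : ℝ) / L ^ 3) ^ 2 *
          ((max P₁.card P₂.card : ℝ) * (∫ x in box L, ‖g x‖) / L ^ 3) ^ k := by
  classical
  set μ : Measure (Fin 3 → ℝ) := volume.restrict (box L) with hμ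
  have hmeas : (volume : Measure ((Fin k → Fin 3 → ℝ) × (Fin k → Fin 3 → ℝ))).restrict
      ((Set.univ.pi fun _ => box L) ×ˢ (Set.univ.pi fun _ => box L)) =
      (Measure.pi fun _ => μ).prod (Measure.pi fun _ => μ) := by
    rw [Measure.volume_eq_prod, ← Measure.prod_restrict, volume_pi, Measure.restrict_pi_pi]
  rw [hmeas]
  set G := ∫ x in box L, ‖g x‖ with hG
  have hG0 : 0 ≤ G := integral_nonneg fun _ => norm_nonneg _
  set S := (Fintype.piFinset fun _ : Fin (k+1) => P₁) ×ˢ (Fintype.piFinset fun _ : Fin (k+1) => P₂)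
    with hS
  let A : (Fin (k + 1) → Fin 3 → ℝ) × (Fin (k + 1) → Fin 3 → ℝ) → Fin (k+1) → Fin 3 → ℝ :=
    fun s i => s.1 i - s.1 (π.symm i)
  let B : (Fin (k + 1) → Fin 3 → ℝ) × (Fin (k + 1) → Fin 3 → ℝ) → Fin (k+1) → Fin 3 → ℝ :=
    fun s i => s.2 i - s.2 (τ.symm i)
  set C : ℂ := (((L : ℂ) ^ 3)⁻¹) ^ (k + 1) with hC
  have hint : ∀ w : (Fin k → Fin 3 → ℝ) × (Fin k → Fin 3 → ℝ),
      (∏ i : Fin (k + 1),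
            gam L P₁ (Fin.cases x₁ w.1 i - Fin.cases x₁ w.1 (π i))) *
        (∏ j : Fin (k + 1),
            gam L P₂ (Fin.cases y₁ w.2 j - Fin.cases y₁ w.2 (τ j))) *
        (∏ j : Fin k, g (w.1 j - w.2 j)) =
      ∑ s ∈ S, (C * C * (pw (A s 0) x₁ * pw (B s 0) y₁)) *
        ∏ j : Fin k, pairF g (A s j.succ) (B s j.succ) (w.1 j, w.2 j) := by
    intro w
    rw [gam_prod L P₁ k π (fun i => Fin.cases x₁ w.1 i),
      gam_prod L P₂ k τ (fun i => Fin.cases y₁ w.2 i), mul_mul_mul_comm, Finset.sum_mul_sum,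
      ← Finset.sum_product', mul_assoc, Finset.sum_mul, Finset.mul_sum]
    refine Finset.sum_congr rfl fun s _ => ?_
    simp only [Fin.prod_univ_succ, Fin.cases_zero, Fin.cases_succ, pairF, Finset.prod_mul_distrib,
      A, B]
    ring
  simp only [hint]
  rw [integral_finsetSum _ fun s _ => ((pi_pair μ _).2 fun j =>
    pair_integrable hL hg_meas hg_per hg_int _ _).const_mul _]
  have hterm : ∀ s ∈ S, ‖∫ w : (Fin k → Fin 3 → ℝ) × (Fin k → Fin 3 → ℝ),
      (C * C * (pw (A s 0) x₁ * pw (B s 0) y₁)) *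
        ∏ j : Fin k, pairF g (A s j.succ) (B s j.succ) (w.1 j, w.2 j)
        ∂((Measure.pi fun _ => μ).prod (Measure.pi fun _ => μ))‖ ≤
      if ∀ j : Fin k, A s j.succ + B s j.succ = 0 then ‖C‖ ^ 2 * (L ^ 3 * G) ^ k else 0 := by
    intro s hs
    simp only [hS, Finset.mem_product, Fintype.mem_piFinset] at hs
    have hA : ∀ i, IsLat L (A s i) := fun i =>
      IsLat.sub (hP₁ _ (hs.1 _)) (hP₁ _ (hs.1 _))
    have hB : ∀ i, IsLat L (B s i) := fun i =>
      IsLat.sub (hP₂ _ (hs.2 _)) (hP₂ _ (hs.2 _))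
    rw [integral_const_mul, (pi_pair μ fun j => pairF g (A s j.succ) (B s j.succ)).1]
    split_ifs with hc
    · rw [norm_mul, norm_mul, norm_mul, norm_mul, pw_norm, pw_norm, mul_one, mul_one, ← pow_two,
        norm_prod]
      gcongr
      calc _ ≤ ∏ j : Fin k, (L ^ 3 * G) := Finset.prod_le_prod (fun _ _ => norm_nonneg _)
            fun j _ => (pair_bound hL hg_meas hg_per hg_int (hA _) (hB _)).2
        _ = _ := by simp
    · push Not at hc
      obtain ⟨j, hj⟩ := hc
      rw [Finset.prod_eq_zero (Finset.mem_univ j)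
        ((pair_bound hL hg_meas hg_per hg_int (hA _) (hB _)).1 hj)]
      simp
  refine (norm_sum_le _ _).trans ((Finset.sum_le_sum hterm).trans ?_)
  rw [← Finset.sum_filter, Finset.sum_const, nsmul_eq_mul]
  have hcard : ((S.filter fun s => ∀ j : Fin k, A s j.succ + B s j.succ = 0).card : ℝ) ≤
      (max P₁.card P₂.card : ℝ) ^ (k + 2) := by
    have := solSet_card k π τ P₁ P₂ hlinked
    have h2 : (S.filter fun s => ∀ j : Fin k, A s j.succ + B s j.succ = 0) =
      solSet k π τ P₁ P₂ := by
      unfold solSet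
      congr
    rw [h2]
    exact_mod_cast this
  have hCn : ‖C‖ = ((L ^ 3)⁻¹) ^ (k + 1) := by
    rw [hC, norm_pow, norm_inv, norm_pow, Complex.norm_real, Real.norm_of_nonneg hL.le]
  calc _ ≤ (max P₁.card P₂.card : ℝ) ^ (k + 2) * (‖C‖ ^ 2 * (L ^ 3 * G) ^ k) := by
        gcongr
    _ = _ := by
        rw [hCn]
        generalize (max P₁.card P₂.card : ℝ) = N
        have hL0 : L ^ 3 ≠ 0 := by positivity
        generalize L ^ 3 = V at hL0
        simp only [div_pow, mul_pow, inv_pow, pow_add, ← pow_mul]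
        field_simp
        try ring

end
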